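/- arXiv:1602.02859 — 2 statements merged into one kernel-verified Lean document; each statement's English description precedes it below -/
import Mathlib

section
/- Let n ≥ 1, 0 < q₁, q₂ ≤ ∞ and s₁, s₂ ∈ ℝ. Then the embedding L(q₁,s₁) ⊂ L(q₂,s₂) holds (i.e., there is a constant C with ‖f‖_{L(q₂,s₂)} ≤ C‖f‖_{L(q₁,s₁)} for all measurable f on ℝⁿ) if and only if either (s₂ ≤ s₁ and 1/q₂ ≥ 1/q₁ and 1/q₂ + s₂/n < 1/q₁ + s₁/n) or (s₂ = s₁ and q₂ = q₁). -/
/-!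
Sufficiency. When `q₂ = q₁` the weights are ordered pointwise, since `⟨x⟩ ≥ 1`
(`Lns_mono_weight`). When `q₂ < q₁`, Hölder's inequality with `1/r = 1/q₂ - 1/q₁` bounds the
embedding constant by `‖⟨x⟩^{s₂-s₁}‖_{L^r}`, which is finite exactly when `(s₁ - s₂) r > n`, that
is, when the index inequality is strict (`embedding_of_lt`).

Necessity. The embedding is tested on `⟨x⟩^{-s₁-m/q₁} 1_A`; with `J = ∫_A ⟨x⟩^{-m}` and `c` a lower
bound on `A` for `⟨x⟩^{s₂-s₁+m(1/q₂-1/q₁)}` this gives `c J^{1/q₂} ≤ C J^{1/q₁}`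
(`necessary_of_embedding`). Distant unit cubes (`m = 0`) give `s₂ ≤ s₁`; shrinking cubes at the
origin (`m = 0`) give `1/q₁ ≤ 1/q₂`. If `1/q₁ < 1/q₂` but the index inequality failed, growing
balls with `m = n` and `c = 1` would bound `∫ ⟨x⟩^{-n}`, which diverges
(`lintegral_weight_eq_top`). If `q₁ = q₂`, the index inequality is just `s₂ < s₁`.
-/

open scoped ENNReal NNReal BigOperators
open MeasureTheory

noncomputable section

/-- `1/q` for `q ∈ [0,∞]`, with the convention `1/∞ = 0`. -/
def iv (q : ℝ≥0∞) : ℝ := q⁻¹.toReal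

/-- The dual exponent `q'` of `q ∈ [1,∞]`, defined by `1/q + 1/q' = 1`. -/
def dualExp (q : ℝ≥0∞) : ℝ≥0∞ :=
  if q = ∞ then 1 else if q = 1 then ∞ else ENNReal.ofReal (q.toReal / (q.toReal - 1))

/-- Euclidean norm `|k|` of an integer vector `k ∈ ℤⁿ`. -/
def znorm {n : ℕ} (k : Fin n → ℤ) : ℝ := Real.sqrt (∑ i, ((k i : ℝ)) ^ 2)

/-- Japanese bracket `⟨k⟩ = (1+|k|²)^{1/2}` of an integer vector. -/
def zbr {n : ℕ} (k : Fin n → ℤ) : ℝ := Real.sqrt (1 + ∑ i, ((k i : ℝ)) ^ 2)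

/-- Euclidean norm `|x|` on `ℝⁿ` (realized as `Fin n → ℝ`). -/
def rnorm {n : ℕ} (x : Fin n → ℝ) : ℝ := Real.sqrt (∑ i, (x i) ^ 2)

/-- Japanese bracket `⟨x⟩ = (1+|x|²)^{1/2}` on `ℝⁿ`. -/
def rbr {n : ℕ} (x : Fin n → ℝ) : ℝ := Real.sqrt (1 + ∑ i, (x i) ^ 2)

/-- The weighted norm `‖a‖_{l(q,s)}` (weight `⟨k⟩^s`) of a nonnegative sequence on `ℤⁿ`,
valued in `ℝ≥0∞`.  For `q = ∞` it is `sup_k a_k ⟨k⟩^s`, otherwise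
`(∑_k (a_k ⟨k⟩^s)^q)^{1/q}`. -/
def lns (n : ℕ) (q : ℝ≥0∞) (s : ℝ) (a : (Fin n → ℤ) → ℝ≥0∞) : ℝ≥0∞ :=
  if q = ∞ then ⨆ k, a k * ENNReal.ofReal (zbr k ^ s)
  else (∑' k, (a k * ENNReal.ofReal (zbr k ^ s)) ^ q.toReal) ^ (1 / q.toReal)

/-- Convolution of (nonnegative) sequences on `ℤⁿ`: `(a∗b)(k) = ∑_j a_{k-j} b_j`. -/
def dconv {n : ℕ} (a b : (Fin n → ℤ) → ℝ≥0∞) : (Fin n → ℤ) → ℝ≥0∞ :=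
  fun k => ∑' j, a (k - j) * b j

/-- The weighted norm `‖f‖_{L(q,s)}` (weight `⟨x⟩^s`) of a nonnegative function on `ℝⁿ`.
For `q = ∞` it is `ess sup_x f(x) ⟨x⟩^s`, otherwise `(∫ (f(x) ⟨x⟩^s)^q dx)^{1/q}`. -/
def Lns (n : ℕ) (q : ℝ≥0∞) (s : ℝ) (f : (Fin n → ℝ) → ℝ≥0∞) : ℝ≥0∞ :=
  if q = ∞ then essSup (fun x => f x * ENNReal.ofReal (rbr x ^ s)) volume
  else (∫⁻ x, (f x * ENNReal.ofReal (rbr x ^ s)) ^ q.toReal) ^ (1 / q.toReal)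

/-- The power-weighted norm `‖f‖_{𝕃(q,s)}` (weight `|x|^s`) of a nonnegative function on `ℝⁿ`. -/
def Pns (n : ℕ) (q : ℝ≥0∞) (s : ℝ) (f : (Fin n → ℝ) → ℝ≥0∞) : ℝ≥0∞ :=
  if q = ∞ then essSup (fun x => f x * ENNReal.ofReal (rnorm x ^ s)) volume
  else (∫⁻ x, (f x * ENNReal.ofReal (rnorm x ^ s)) ^ q.toReal) ^ (1 / q.toReal)

/-- Convolution of (nonnegative) functions on `ℝⁿ`: `(f∗g)(x) = ∫ f(x-y) g(y) dy`. -/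
def cconv {n : ℕ} (f g : (Fin n → ℝ) → ℝ≥0∞) : (Fin n → ℝ) → ℝ≥0∞ :=
  fun x => ∫⁻ y, f (x - y) * g y

/-- The discrete fractional integral operator `(𝓘_λ a)(k) = ∑_{j ≠ k} a_j / |k-j|^{n-λ}`. -/
def dRiesz (n : ℕ) (lam : ℝ) (a : (Fin n → ℤ) → ℝ≥0∞) : (Fin n → ℤ) → ℝ≥0∞ :=
  fun k => ∑' j, if j = k then 0 else a j * ENNReal.ofReal (znorm (k - j) ^ (lam - (n : ℝ)))

/-- The Riesz potential `(I_λ f)(x) = ∫ f(y) / |x-y|^{n-λ} dy`. -/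
def cRiesz (n : ℕ) (lam : ℝ) (f : (Fin n → ℝ) → ℝ≥0∞) : (Fin n → ℝ) → ℝ≥0∞ :=
  fun x => ∫⁻ y, f y * ENNReal.ofReal (rnorm (x - y) ^ (lam - (n : ℝ)))

/-- Condition `𝒜₁`. -/
def condA1 (n : ℕ) (q q₁ q₂ : ℝ≥0∞) (s s₁ s₂ : ℝ) : Prop :=
  s ≤ s₁ ∧ s ≤ s₂ ∧ 0 ≤ s₁ + s₂ ∧
  1 + max (iv q + s / (n : ℝ)) 0 < max (iv q₁ + s₁ / (n : ℝ)) 0 + max (iv q₂ + s₂ / (n : ℝ)) 0 ∧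
  iv q + s / (n : ℝ) ≤ iv q₁ + s₁ / (n : ℝ) ∧
  iv q + s / (n : ℝ) ≤ iv q₂ + s₂ / (n : ℝ) ∧
  1 ≤ iv q₁ + s₁ / (n : ℝ) + iv q₂ + s₂ / (n : ℝ) ∧
  (iv q + s / (n : ℝ) = iv q₁ + s₁ / (n : ℝ) → q = q₁ ∧ s = s₁) ∧
  (iv q + s / (n : ℝ) = iv q₂ + s₂ / (n : ℝ) → q = q₂ ∧ s = s₂) ∧
  (1 = iv q₁ + s₁ / (n : ℝ) + iv q₂ + s₂ / (n : ℝ) → dualExp q₁ = q₂ ∧ -s₁ = s₂)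

/-- Condition `𝒜₂`. -/
def condA2 (q q₁ q₂ : ℝ≥0∞) (s s₁ s₂ : ℝ) : Prop :=
  s = 0 ∧ s₁ = 0 ∧ s₂ = 0 ∧
  ((q = q₁ ∧ q₂ = 1) ∨ (q = q₂ ∧ q₁ = 1) ∨ (q = ∞ ∧ iv q₁ + iv q₂ = 1))

/-- Condition `𝒜₃`. -/
def condA3 (n : ℕ) (q q₁ q₂ : ℝ≥0∞) (s s₁ s₂ : ℝ) : Prop :=
  s ≤ s₁ ∧ s ≤ s₂ ∧ iv q₁ + iv q₂ = 1 ∧ s₁ + s₂ = 0 ∧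
  iv q + s / (n : ℝ) < 0 ∧ 0 ≤ iv q₁ + s₁ / (n : ℝ) ∧ 0 ≤ iv q₂ + s₂ / (n : ℝ)

/-- Condition `𝒜₄`. -/
def condA4 (n : ℕ) (q q₁ q₂ : ℝ≥0∞) (s s₁ s₂ : ℝ) : Prop :=
  s ≤ s₁ ∧ s ≤ s₂ ∧ 0 ≤ s₁ + s₂ ∧
  1 + (iv q + s / (n : ℝ)) = iv q₁ + s₁ / (n : ℝ) + iv q₂ + s₂ / (n : ℝ) ∧
  iv q ≤ iv q₁ + iv q₂ ∧
  iv q + s / (n : ℝ) < iv q₁ + s₁ / (n : ℝ) ∧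
  iv q + s / (n : ℝ) < iv q₂ + s₂ / (n : ℝ) ∧
  0 < iv q + s / (n : ℝ) ∧
  ((s = s₁ ∨ s = s₂) → q ≠ ∞ ∧ q₁ ≠ 1 ∧ q₂ ≠ 1)

/-- Condition `𝒞₁`. -/
def condC1 (n : ℕ) (lam : ℝ) (q p : ℝ≥0∞) (s t : ℝ) : Prop :=
  s ≤ t ∧
  lam / (n : ℝ) + max (iv q + s / (n : ℝ)) 0 < max (iv p + t / (n : ℝ)) 0 ∧
  lam / (n : ℝ) + iv q + s / (n : ℝ) ≤ 1 ∧
  (lam / (n : ℝ) + iv q + s / (n : ℝ) = 1 → q = ∞ ∧ s = (n : ℝ) - lam)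

/-- Condition `𝒞₃`. -/
def condC3 (n : ℕ) (lam : ℝ) (q p : ℝ≥0∞) (s t : ℝ) : Prop :=
  s ≤ t ∧ p = 1 ∧ t = lam - (n : ℝ) ∧ iv q + s / (n : ℝ) < 0

/-- Condition `𝒞₄`. -/
def condC4 (n : ℕ) (lam : ℝ) (q p : ℝ≥0∞) (s t : ℝ) : Prop :=
  s ≤ t ∧
  lam / (n : ℝ) + iv q + s / (n : ℝ) = iv p + t / (n : ℝ) ∧
  iv q ≤ iv p ∧
  0 < iv q + s / (n : ℝ) ∧
  iv p + t / (n : ℝ) < 1 ∧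
  (s = t → q ≠ ∞ ∧ p ≠ 1)

end

/-! ### Exponents and the norm of `L(q,s)` -/

theorem iv_eq (q : ℝ≥0∞) : iv q = 1 / q.toReal := by
  simp [iv, ENNReal.toReal_inv]

theorem iv_nonneg (q : ℝ≥0∞) : 0 ≤ iv q := ENNReal.toReal_nonneg

theorem iv_top : iv ∞ = 0 := by simp [iv]

theorem Lns_top {n : ℕ} (s : ℝ) (f : (Fin n → ℝ) → ℝ≥0∞) :
    Lns n ∞ s f = essSup (fun x => f x * ENNReal.ofReal (rbr x ^ s)) volume := by
  simp [Lns]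

theorem Lns_of_ne_top {n : ℕ} {q : ℝ≥0∞} (hq : q ≠ ∞) (s : ℝ) (f : (Fin n → ℝ) → ℝ≥0∞) :
    Lns n q s f =
      (∫⁻ x, (f x * ENNReal.ofReal (rbr x ^ s)) ^ q.toReal) ^ iv q := by
  simp [Lns, hq, iv_eq]

/-! ### The Japanese bracket and integrability of its powers -/

theorem one_le_rbr {n : ℕ} (x : Fin n → ℝ) : 1 ≤ rbr x := by
  unfold rbr
  rw [Real.one_le_sqrt]
  have : 0 ≤ ∑ i, x i ^ 2 := Finset.sum_nonneg fun i _ => sq_nonneg _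
  linarith

theorem rbr_pos {n : ℕ} (x : Fin n → ℝ) : 0 < rbr x := one_pos.trans_le (one_le_rbr x)

theorem abs_le_rbr {n : ℕ} (x : Fin n → ℝ) (i : Fin n) : |x i| ≤ rbr x := by
  unfold rbr
  apply Real.abs_le_sqrt
  have := Finset.single_le_sum (f := fun i => x i ^ 2) (fun i _ => sq_nonneg _)
    (Finset.mem_univ i)
  linarith

theorem norm_le_rbr {n : ℕ} (x : Fin n → ℝ) : ‖x‖ ≤ rbr x :=
  (pi_norm_le_iff_of_nonneg (rbr_pos x).le).2 fun i => abs_le_rbr x i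

theorem rbr_le {n : ℕ} {x : Fin n → ℝ} {M : ℝ} (hM : 1 ≤ M) (hx : ‖x‖ ≤ M) :
    rbr x ≤ √(1 + n) * M := by
  unfold rbr
  rw [Real.sqrt_le_left (by positivity), mul_pow, Real.sq_sqrt (by positivity)]
  have : ∑ i, x i ^ 2 ≤ ∑ _i : Fin n, M ^ 2 := by
    refine Finset.sum_le_sum fun i _ => ?_
    rw [← sq_abs]
    exact pow_le_pow_left₀ (abs_nonneg _) ((norm_le_pi_norm x i).trans hx) 2
  simp only [Finset.sum_const, Finset.card_univ, Fintype.card_fin, nsmul_eq_mul] at this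
  nlinarith

theorem measurable_rbr (n : ℕ) : Measurable (rbr : (Fin n → ℝ) → ℝ) := by
  unfold rbr
  fun_prop

theorem measurable_weight (n : ℕ) (a : ℝ) :
    Measurable fun x : Fin n → ℝ => ENNReal.ofReal (rbr x ^ a) :=
  ((measurable_rbr n).pow_const a).ennreal_ofReal

theorem weight_mul {n : ℕ} (x : Fin n → ℝ) (a b : ℝ) :
    ENNReal.ofReal (rbr x ^ a) * ENNReal.ofReal (rbr x ^ b) =
      ENNReal.ofReal (rbr x ^ (a + b)) := by
  rw [← ENNReal.ofReal_mul (Real.rpow_nonneg (rbr_pos x).le _), Real.rpow_add (rbr_pos x)]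

theorem weight_rpow {n : ℕ} (x : Fin n → ℝ) (a b : ℝ) :
    ENNReal.ofReal (rbr x ^ a) ^ b = ENNReal.ofReal (rbr x ^ (a * b)) := by
  rw [ENNReal.ofReal_rpow_of_pos (Real.rpow_pos_of_pos (rbr_pos x) _),
    Real.rpow_mul (rbr_pos x).le]

theorem lintegral_weight_lt_top {n : ℕ} {r : ℝ} (hr : (n : ℝ) < r) :
    ∫⁻ x : Fin n → ℝ, ENNReal.ofReal (rbr x ^ (-r)) < ∞ := by
  have hr0 : 0 ≤ r := (Nat.cast_nonneg n).trans hr.le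
  have hfin : ∫⁻ x : Fin n → ℝ, ENNReal.ofReal ((1 + ‖x‖) ^ (-r)) < ∞ :=
    finite_integral_one_add_norm (by simpa using hr)
  refine lt_of_le_of_lt (b := ∫⁻ x : Fin n → ℝ,
    ENNReal.ofReal (2 ^ r) * ENNReal.ofReal ((1 + ‖x‖) ^ (-r))) ?_ ?_
  · refine lintegral_mono fun x => ?_
    rw [← ENNReal.ofReal_mul (by positivity)]
    apply ENNReal.ofReal_le_ofReal
    have h1 : (1 + ‖x‖) / 2 ≤ rbr x := by linarith [one_le_rbr x, norm_le_rbr x]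
    have h0 : 0 < (1 + ‖x‖) / 2 := by positivity
    refine (Real.rpow_le_rpow_of_nonpos h0 h1 (by linarith)).trans_eq ?_
    rw [Real.div_rpow (by positivity) (by norm_num), Real.rpow_neg (x := 2) (by norm_num),
      div_inv_eq_mul, mul_comm]
  · rw [lintegral_const_mul' _ _ ENNReal.ofReal_ne_top]
    exact ENNReal.mul_lt_top ENNReal.ofReal_lt_top hfin

/-- The critical weight `⟨x⟩^{-n}` is not integrable: in polar coordinates its tail is comparable
to `∫_1^∞ dy / y`. -/
theorem lintegral_weight_eq_top {n : ℕ} (hn : 1 ≤ n) :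
    ∫⁻ x : Fin n → ℝ, ENNReal.ofReal (rbr x ^ (-(n : ℝ))) = ∞ := by
  by_contra hne
  have : Nonempty (Fin n) := ⟨⟨0, hn⟩⟩
  have hint : Integrable (fun x : Fin n → ℝ => rbr x ^ (-(n : ℝ))) := by
    refine ⟨((measurable_rbr n).pow_const _).aestronglyMeasurable, ?_⟩
    rw [hasFiniteIntegral_iff_ofReal (.of_forall fun x => Real.rpow_nonneg (rbr_pos x).le _)]
    exact lt_top_iff_ne_top.2 hne
  let g : ℝ → ℝ := (Set.Ioi 1).indicator fun y => y ^ (-(n : ℝ))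
  have hg : Measurable g :=
    (measurable_id.pow_const _).indicator measurableSet_Ioi
  have hint2 : Integrable (fun x : Fin n → ℝ => g ‖x‖) := by
    refine (hint.const_mul (√(1 + n) ^ (n : ℝ))).mono'
      (hg.comp measurable_norm).aestronglyMeasurable (.of_forall fun x => ?_)
    by_cases hx : 1 < ‖x‖
    · have hx0 : 0 < ‖x‖ := by linarith
      have hK : 0 < √(1 + (n : ℝ)) := by positivity
      have hb := rbr_le hx.le le_rfl
      simp only [g, Set.indicator_of_mem (Set.mem_Ioi.2 hx)]
      rw [Real.norm_of_nonneg (by positivity)]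
      have := Real.rpow_le_rpow_of_nonpos (rbr_pos x) hb
        (neg_nonpos.2 (Nat.cast_nonneg (α := ℝ) n))
      rw [Real.mul_rpow hK.le hx0.le, Real.rpow_neg hK.le] at this
      have hKn : 0 < √(1 + (n : ℝ)) ^ (n : ℝ) := by positivity
      rwa [inv_mul_le_iff₀ hKn] at this
    · simp only [g, Set.indicator_of_notMem (fun h => hx (Set.mem_Ioi.1 h)), norm_zero]
      have := Real.rpow_nonneg (rbr_pos x).le (-(n : ℝ))
      positivity
  rw [integrable_fun_norm_addHaar] at hint2
  refine not_integrableOn_Ioi_inv (a := 1) ?_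
  refine (hint2.mono_set (Set.Ioi_subset_Ioi zero_le_one)).congr_fun (fun y hy => ?_)
    measurableSet_Ioi
  have hy0 : 0 < y := one_pos.trans hy
  simp only [g, Set.indicator_of_mem hy, Module.finrank_fintype_fun_eq_card, Fintype.card_fin,
    smul_eq_mul]
  rw [← Real.rpow_natCast, ← Real.rpow_add hy0, ← Real.rpow_neg_one]
  congr 1
  push_cast [Nat.cast_sub hn]
  ring

/-! ### Sufficiency -/

theorem Lns_mono_weight {n : ℕ} (q : ℝ≥0∞) {s t : ℝ} (hst : s ≤ t)
    (f : (Fin n → ℝ) → ℝ≥0∞) : Lns n q s f ≤ Lns n q t f := by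
  have key (x : Fin n → ℝ) :
      f x * ENNReal.ofReal (rbr x ^ s) ≤ f x * ENNReal.ofReal (rbr x ^ t) := by
    gcongr
    exact one_le_rbr x
  by_cases hq : q = ∞
  · subst hq
    rw [Lns_top, Lns_top]
    exact essSup_mono_ae (.of_forall key)
  · rw [Lns_of_ne_top hq, Lns_of_ne_top hq]
    refine ENNReal.rpow_le_rpow (lintegral_mono fun x => ?_) (iv_nonneg q)
    exact ENNReal.rpow_le_rpow (key x) ENNReal.toReal_nonneg

/-- The case `q₂ < q₁` of the embedding: Hölder's inequality with third exponent `r`,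
`1/r = 1/q₂ - 1/q₁`, where `‖⟨x⟩^{s₂-s₁}‖_{L^r} < ∞` because `(s₁ - s₂) r > n`. -/
theorem embedding_of_lt {n : ℕ} (hn : 1 ≤ n) {q₁ q₂ : ℝ≥0∞} (hq₂ : 0 < q₂) {s₁ s₂ : ℝ}
    (hq : q₂ < q₁) (h : iv q₂ + s₂ / (n : ℝ) < iv q₁ + s₁ / (n : ℝ)) :
    ∃ C : ℝ≥0, ∀ f : (Fin n → ℝ) → ℝ≥0∞, Measurable f →
        Lns n q₂ s₂ f ≤ C * Lns n q₁ s₁ f := by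
  have hq₂t : q₂ ≠ ∞ := hq.ne_top
  have hp2 : 0 < q₂.toReal := ENNReal.toReal_pos hq₂.ne' hq₂t
  have hn0 : (0 : ℝ) < n := by exact_mod_cast hn
  have hiv : iv q₁ < iv q₂ := by
    unfold iv
    rw [ENNReal.toReal_lt_toReal (ENNReal.inv_ne_top.2 (hq₂.trans hq).ne')
      (ENNReal.inv_ne_top.2 hq₂.ne'), ENNReal.inv_lt_inv]
    exact hq
  have hd : 0 < iv q₂ - iv q₁ := sub_pos.2 hiv
  set r : ℝ := 1 / (iv q₂ - iv q₁) with hr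
  have hr0 : 0 < r := by positivity
  have hnr : (n : ℝ) < (s₁ - s₂) * r := by
    have h1 : iv q₂ - iv q₁ < (s₁ - s₂) / n := by rw [sub_div]; linarith
    rw [lt_div_iff₀ hn0] at h1
    rw [hr, mul_one_div, lt_div_iff₀ hd]
    linarith
  have hI := lintegral_weight_lt_top hnr
  set I := ∫⁻ x : Fin n → ℝ, ENNReal.ofReal (rbr x ^ (-((s₁ - s₂) * r))) with hIdef
  have hIt : I ^ (iv q₂ - iv q₁) ≠ ∞ := ENNReal.rpow_ne_top_of_nonneg hd.le hI.ne
  refine ⟨(I ^ (iv q₂ - iv q₁)).toNNReal, fun f hf => ?_⟩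
  rw [ENNReal.coe_toNNReal hIt]
  -- The factorisation `f ⟨x⟩^{s₂} = (f ⟨x⟩^{s₁}) ⟨x⟩^{s₂-s₁}` to which Hölder is applied.
  have hsplit (x : Fin n → ℝ) : f x * ENNReal.ofReal (rbr x ^ s₂) =
      f x * ENNReal.ofReal (rbr x ^ s₁) * ENNReal.ofReal (rbr x ^ (s₂ - s₁)) := by
    rw [mul_assoc, weight_mul]
    congr 4
    ring
  by_cases hq₁t : q₁ = ∞
  · subst hq₁t
    rw [Lns_of_ne_top hq₂t, Lns_top]
    have hr2 : r = q₂.toReal := by rw [hr, iv_top, iv_eq]; simp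
    set M := essSup (fun x => f x * ENNReal.ofReal (rbr x ^ s₁)) volume
    have hle : ∫⁻ x, (f x * ENNReal.ofReal (rbr x ^ s₂)) ^ q₂.toReal
        ≤ M ^ q₂.toReal * I := by
      rw [hIdef, ← lintegral_const_mul _ (measurable_weight n _)]
      refine lintegral_mono_ae ?_
      filter_upwards [ENNReal.ae_le_essSup fun x => f x * ENNReal.ofReal (rbr x ^ s₁)]
        with x hx
      rw [hsplit, ENNReal.mul_rpow_of_nonneg _ _ hp2.le, weight_rpow, ← hr2]
      have : (s₂ - s₁) * r = -((s₁ - s₂) * r) := by ring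
      rw [this]
      gcongr
    refine (ENNReal.rpow_le_rpow hle (iv_nonneg q₂)).trans_eq ?_
    rw [ENNReal.mul_rpow_of_nonneg _ _ (iv_nonneg q₂), ← ENNReal.rpow_mul, iv_top, sub_zero,
      iv_eq, mul_one_div_cancel hp2.ne', ENNReal.rpow_one, mul_comm]
  · rw [Lns_of_ne_top hq₂t, Lns_of_ne_top hq₁t]
    have hpq : q₂.toReal < q₁.toReal := (ENNReal.toReal_lt_toReal hq₂t hq₁t).2 hq
    have hexp : 1 / q₂.toReal = 1 / q₁.toReal + 1 / r := by
      rw [hr, one_div_one_div, iv_eq, iv_eq]; ring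
    have hH := ENNReal.lintegral_Lp_mul_le_Lq_mul_Lr hp2 hpq hexp volume
      (hf.mul (measurable_weight n s₁)).aemeasurable
      (measurable_weight n (s₂ - s₁)).aemeasurable
    simp only [Pi.mul_apply] at hH
    simp only [hsplit]
    rw [iv_eq q₂]
    refine hH.trans_eq ?_
    simp only [weight_rpow]
    have : (s₂ - s₁) * r = -((s₁ - s₂) * r) := by ring
    rw [this, ← hIdef, mul_comm, iv_eq q₁, hexp, add_sub_cancel_left]

/-! ### Necessity -/

/-- Upper bound for the norm of the test function `⟨x⟩^{-s-m/q} 1_A`, normalised so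
that its weighted `q`-th power is `⟨x⟩^{-m} 1_A`. -/
theorem Lns_test_le {n : ℕ} {q : ℝ≥0∞} (hq : 0 < q) (s m : ℝ) {A : Set (Fin n → ℝ)}
    (hA : MeasurableSet A) :
    Lns n q s (A.indicator fun x => ENNReal.ofReal (rbr x ^ (-s - m * iv q))) ≤
      (∫⁻ x in A, ENNReal.ofReal (rbr x ^ (-m))) ^ iv q := by
  by_cases hqt : q = ∞
  · subst hqt
    rw [Lns_top, iv_top, ENNReal.rpow_zero]
    refine essSup_le_of_ae_le _ (.of_forall fun x => ?_)
    by_cases hx : x ∈ A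
    · simp [Set.indicator_of_mem hx, weight_mul]
    · simp [Set.indicator_of_notMem hx]
  · have hp : 0 < q.toReal := ENNReal.toReal_pos hq.ne' hqt
    rw [Lns_of_ne_top hqt, ← lintegral_indicator hA]
    refine ENNReal.rpow_le_rpow (lintegral_mono fun x => ?_) (iv_nonneg q)
    by_cases hx : x ∈ A
    · simp only [Set.indicator_of_mem hx]
      rw [weight_mul, weight_rpow, iv_eq]
      apply le_of_eq
      congr 2
      field_simp
      ring
    · simp [Set.indicator_of_notMem hx, hp]

/-- Lower bound for the norm of a function dominating `c ⟨x⟩^{-s-m/q}` on `A`. For `q = ∞` the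
hypothesis `hA0` serves to make `A` non-null. -/
theorem le_Lns_of_le {n : ℕ} {q : ℝ≥0∞} (hq : 0 < q) (s m : ℝ) {A : Set (Fin n → ℝ)}
    (hA : MeasurableSet A) (hA0 : ∫⁻ x in A, ENNReal.ofReal (rbr x ^ (-m)) ≠ 0)
    (f : (Fin n → ℝ) → ℝ≥0∞) (c : ℝ≥0∞)
    (hf : ∀ x ∈ A, c * ENNReal.ofReal (rbr x ^ (-m * iv q)) ≤
      f x * ENNReal.ofReal (rbr x ^ s)) :
    c * (∫⁻ x in A, ENNReal.ofReal (rbr x ^ (-m))) ^ iv q ≤ Lns n q s f := by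
  by_cases hqt : q = ∞
  · subst hqt
    rw [Lns_top, iv_top, ENNReal.rpow_zero, mul_one]
    by_contra hlt
    refine hA0 (setLIntegral_measure_zero _ _ ?_)
    have hae := ae_lt_of_essSup_lt (not_le.1 hlt)
    refine measure_mono_null (fun x hx => ?_) (ae_iff.1 hae)
    simpa [iv_top] using hf x hx
  · have hp : 0 < q.toReal := ENNReal.toReal_pos hq.ne' hqt
    have hc : c = (c ^ q.toReal) ^ iv q := by
      rw [← ENNReal.rpow_mul, iv_eq, mul_one_div_cancel hp.ne', ENNReal.rpow_one]
    rw [Lns_of_ne_top hqt]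
    nth_rewrite 1 [hc]
    rw [← ENNReal.mul_rpow_of_nonneg _ _ (iv_nonneg q),
      ← lintegral_const_mul _ (measurable_weight n _), ← lintegral_indicator hA]
    refine ENNReal.rpow_le_rpow (lintegral_mono fun x => ?_) (iv_nonneg q)
    by_cases hx : x ∈ A
    · simp only [Set.indicator_of_mem hx]
      refine le_trans (le_of_eq ?_) (ENNReal.rpow_le_rpow (hf x hx) hp.le)
      rw [ENNReal.mul_rpow_of_nonneg _ _ hp.le, weight_rpow, iv_eq]
      congr 3
      field_simp
    · simp [Set.indicator_of_notMem hx]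

/-- Necessary condition extracted from the test function `⟨x⟩^{-s₁-m/q₁} 1_A`. All three necessary
conditions follow from it by choosing `m` and `A`. -/
theorem necessary_of_embedding {n : ℕ} {q₁ q₂ : ℝ≥0∞} (hq₁ : 0 < q₁) (hq₂ : 0 < q₂) {s₁ s₂ : ℝ}
    {C : ℝ≥0} (hC : ∀ f : (Fin n → ℝ) → ℝ≥0∞, Measurable f →
        Lns n q₂ s₂ f ≤ C * Lns n q₁ s₁ f) (m : ℝ) {A : Set (Fin n → ℝ)}
    (hA : MeasurableSet A) (hA0 : ∫⁻ x in A, ENNReal.ofReal (rbr x ^ (-m)) ≠ 0) (c : ℝ≥0∞)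
    (hc : ∀ x ∈ A, c ≤ ENNReal.ofReal (rbr x ^ (s₂ - s₁ + m * (iv q₂ - iv q₁)))) :
    c * (∫⁻ x in A, ENNReal.ofReal (rbr x ^ (-m))) ^ iv q₂ ≤
      C * (∫⁻ x in A, ENNReal.ofReal (rbr x ^ (-m))) ^ iv q₁ := by
  refine (le_Lns_of_le hq₂ s₂ m hA hA0
    (A.indicator fun x => ENNReal.ofReal (rbr x ^ (-s₁ - m * iv q₁))) c fun x hx => ?_).trans
    ((hC _ ((measurable_weight n _).indicator hA)).trans ?_)
  · rw [Set.indicator_of_mem hx, weight_mul]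
    refine (mul_le_mul_left (hc x hx) _).trans_eq ?_
    rw [weight_mul]
    congr 2
    ring
  · gcongr
    exact Lns_test_le hq₁ s₁ m hA

/-- Testing on unit cubes far from the origin forces `s₂ ≤ s₁`. -/
theorem weight_le_of_embedding {n : ℕ} (hn : 1 ≤ n) {q₁ q₂ : ℝ≥0∞} (hq₁ : 0 < q₁) (hq₂ : 0 < q₂)
    {s₁ s₂ : ℝ} {C : ℝ≥0} (hC : ∀ f : (Fin n → ℝ) → ℝ≥0∞, Measurable f →
        Lns n q₂ s₂ f ≤ C * Lns n q₁ s₁ f) : s₂ ≤ s₁ := by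
  by_contra! hlt
  have hd : 0 < s₂ - s₁ := sub_pos.2 hlt
  have hbd (t : ℝ) (ht : 0 ≤ t) : t ^ (s₂ - s₁) ≤ C := by
    have hJ : ∫⁻ x in Set.Icc (fun _ : Fin n => t) (fun _ => t + 1),
        ENNReal.ofReal (rbr x ^ (-(0 : ℝ))) = 1 := by
      simp [Real.volume_Icc_pi]
    have := necessary_of_embedding hq₁ hq₂ hC 0
      (A := Set.Icc (fun _ : Fin n => t) (fun _ => t + 1)) measurableSet_Icc
      (by rw [hJ]; exact one_ne_zero) (ENNReal.ofReal (t ^ (s₂ - s₁))) (fun x hx => by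
        have h1 : t ≤ rbr x :=
          (hx.1 ⟨0, hn⟩).trans ((le_abs_self _).trans (abs_le_rbr x _))
        rw [zero_mul, add_zero]
        gcongr)
    rw [hJ, ENNReal.one_rpow, ENNReal.one_rpow, mul_one, mul_one] at this
    simpa using ENNReal.ofReal_le_iff_le_toReal ENNReal.coe_ne_top |>.1 this
  obtain ⟨t, ht, ht0⟩ := (((tendsto_rpow_atTop hd).eventually_gt_atTop (C : ℝ)).and
    (Filter.eventually_ge_atTop 0)).exists
  exact absurd (hbd t ht0) (not_le.2 ht)

/-- Testing on small cubes at the origin forces `q₂ ≤ q₁`. -/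
theorem iv_le_of_embedding {n : ℕ} (hn : 1 ≤ n) {q₁ q₂ : ℝ≥0∞} (hq₁ : 0 < q₁) (hq₂ : 0 < q₂)
    {s₁ s₂ : ℝ} {C : ℝ≥0} (hC : ∀ f : (Fin n → ℝ) → ℝ≥0∞, Measurable f →
        Lns n q₂ s₂ f ≤ C * Lns n q₁ s₁ f) : iv q₁ ≤ iv q₂ := by
  have hs := weight_le_of_embedding hn hq₁ hq₂ hC
  by_contra! hlt
  set c : ℝ := √(1 + n) ^ (s₂ - s₁) with hcdef
  have hc0 : 0 < c := by positivity
  have hd : 0 < (n : ℝ) * (iv q₁ - iv q₂) :=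
    mul_pos (by exact_mod_cast hn) (sub_pos.2 hlt)
  have hbd (t : ℝ) (ht : 1 ≤ t) : c * t ^ ((n : ℝ) * (iv q₁ - iv q₂)) ≤ C := by
    have ht0 : 0 < t := by linarith
    have hJ : ∫⁻ x in Set.Icc (fun _ : Fin n => (0 : ℝ)) (fun _ => t⁻¹),
        ENNReal.ofReal (rbr x ^ (-(0 : ℝ))) = ENNReal.ofReal (t ^ (-(n : ℝ))) := by
      simp [Real.volume_Icc_pi, Real.rpow_neg ht0.le, ENNReal.ofReal_inv_of_pos,
        ht0, ENNReal.ofReal_pow ht0.le, ENNReal.inv_pow]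
    have hJ0 : 0 < t ^ (-(n : ℝ)) := by positivity
    have := necessary_of_embedding hq₁ hq₂ hC 0
      (A := Set.Icc (fun _ : Fin n => (0 : ℝ)) (fun _ => t⁻¹)) measurableSet_Icc
      (by rw [hJ]; simpa using hJ0) (ENNReal.ofReal c) (fun x hx => by
        have h1 : ‖x‖ ≤ 1 := by
          refine (pi_norm_le_iff_of_nonneg zero_le_one).2 fun i => ?_
          rw [Real.norm_of_nonneg (hx.1 i)]
          exact (hx.2 i).trans (inv_le_one_of_one_le₀ ht)
        have h2 := rbr_le le_rfl h1
        rw [mul_one] at h2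
        rw [zero_mul, add_zero]
        exact ENNReal.ofReal_le_ofReal
          (Real.rpow_le_rpow_of_nonpos (rbr_pos x) h2 (by linarith)))
    rw [hJ, ENNReal.ofReal_rpow_of_pos hJ0, ENNReal.ofReal_rpow_of_pos hJ0,
      ← ENNReal.ofReal_mul hc0.le, ← ENNReal.ofReal_coe_nnreal,
      ← ENNReal.ofReal_mul C.coe_nonneg, ENNReal.ofReal_le_ofReal_iff (by positivity),
      ← Real.rpow_mul ht0.le, ← Real.rpow_mul ht0.le] at this
    have hsplit : t ^ (-(n : ℝ) * iv q₂) =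
        t ^ ((n : ℝ) * (iv q₁ - iv q₂)) * t ^ (-(n : ℝ) * iv q₁) := by
      rw [← Real.rpow_add ht0]; congr 1; ring
    rw [hsplit, ← mul_assoc] at this
    exact le_of_mul_le_mul_right this (by positivity)
  obtain ⟨t, ht, ht1⟩ := ((((tendsto_rpow_atTop hd).const_mul_atTop hc0).eventually_gt_atTop
    (C : ℝ)).and (Filter.eventually_ge_atTop 1)).exists
  exact absurd (hbd t ht1) (not_le.2 ht)

/-- Testing with `m = n` on growing balls: if `q₂ < q₁`, divergence of `∫ ⟨x⟩^{-n}` forces the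
strict inequality between the scaling indices. -/
theorem index_lt_of_embedding {n : ℕ} (hn : 1 ≤ n) {q₁ q₂ : ℝ≥0∞} (hq₁ : 0 < q₁) (hq₂ : 0 < q₂)
    {s₁ s₂ : ℝ} {C : ℝ≥0} (hC : ∀ f : (Fin n → ℝ) → ℝ≥0∞, Measurable f →
        Lns n q₂ s₂ f ≤ C * Lns n q₁ s₁ f) (hq : iv q₁ < iv q₂) :
    iv q₂ + s₂ / (n : ℝ) < iv q₁ + s₁ / (n : ℝ) := by
  by_contra! hle
  have hn0 : (0 : ℝ) < n := by exact_mod_cast hn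
  have hexp : 0 ≤ s₂ - s₁ + n * (iv q₂ - iv q₁) := by
    have h1 : (s₁ - s₂) / n ≤ iv q₂ - iv q₁ := by rw [sub_div]; linarith
    rw [div_le_iff₀ hn0] at h1
    linarith
  have hd : 0 < iv q₂ - iv q₁ := sub_pos.2 hq
  let w : (Fin n → ℝ) → ℝ≥0∞ := fun x => ENNReal.ofReal (rbr x ^ (-(n : ℝ)))
  let J : ℕ → ℝ≥0∞ := fun k => ∫⁻ x in Metric.ball 0 (k : ℝ), w x
  have hsup : ⨆ k, J k = ∞ := by
    rw [← lintegral_weight_eq_top hn, ← setLIntegral_univ,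
      ← Metric.iUnion_ball_nat (0 : Fin n → ℝ)]
    refine (setLIntegral_iUnion_of_directed _ (Monotone.directed_le fun a b hab => ?_)).symm
    exact Metric.ball_subset_ball (by exact_mod_cast hab)
  have hbd (k : ℕ) : J k ≤ (C : ℝ≥0∞) ^ (iv q₂ - iv q₁)⁻¹ := by
    by_cases h0 : J k = 0
    · rw [h0]; exact zero_le
    have ht : J k ≠ ∞ := by
      refine ne_top_of_le_ne_top
        (measure_ball_lt_top (μ := volume) (x := (0 : Fin n → ℝ)) (r := (k : ℝ))).ne ?_
      rw [← setLIntegral_one]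
      refine setLIntegral_mono measurable_const fun x _ => ?_
      rw [← ENNReal.ofReal_one]
      exact ENNReal.ofReal_le_ofReal
        (Real.rpow_le_one_of_one_le_of_nonpos (one_le_rbr x) (by linarith))
    have := necessary_of_embedding hq₁ hq₂ hC n (A := Metric.ball 0 (k : ℝ))
      measurableSet_ball h0 1 (fun x _ => by
        rw [← ENNReal.ofReal_one]
        exact ENNReal.ofReal_le_ofReal (Real.one_le_rpow (one_le_rbr x) hexp))
    change 1 * J k ^ iv q₂ ≤ C * J k ^ iv q₁ at this
    rw [one_mul, ← sub_add_cancel (iv q₂) (iv q₁), ENNReal.rpow_add _ _ h0 ht,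
      ENNReal.mul_le_mul_iff_left
        (ENNReal.rpow_pos (pos_iff_ne_zero.2 h0) ht).ne'
        (ENNReal.rpow_ne_top_of_nonneg (iv_nonneg _) ht)] at this
    rwa [ENNReal.le_rpow_inv_iff hd]
  have : (∞ : ℝ≥0∞) ≤ (C : ℝ≥0∞) ^ (iv q₂ - iv q₁)⁻¹ := hsup ▸ iSup_le hbd
  exact ENNReal.rpow_ne_top_of_nonneg (inv_nonneg.2 hd.le) ENNReal.coe_ne_top (top_le_iff.1 this)

/-! ### The sharp embedding -/

theorem iv_le_iff {q₁ q₂ : ℝ≥0∞} (hq₁ : 0 < q₁) (hq₂ : 0 < q₂) : iv q₁ ≤ iv q₂ ↔ q₂ ≤ q₁ := by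
  unfold iv
  rw [ENNReal.toReal_le_toReal (ENNReal.inv_ne_top.2 hq₁.ne') (ENNReal.inv_ne_top.2 hq₂.ne'),
    ENNReal.inv_le_inv]

/-- sharp embedding between weighted continuous Lebesgue spaces. -/
theorem continuous_embedding_sharp
    (n : ℕ) (hn : 1 ≤ n) (q₁ q₂ : ℝ≥0∞) (hq₁ : 0 < q₁) (hq₂ : 0 < q₂) (s₁ s₂ : ℝ) :
    (∃ C : ℝ≥0, ∀ f : (Fin n → ℝ) → ℝ≥0∞, Measurable f →
        Lns n q₂ s₂ f ≤ C * Lns n q₁ s₁ f) ↔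
      ((s₂ ≤ s₁ ∧ iv q₁ ≤ iv q₂ ∧ iv q₂ + s₂ / (n : ℝ) < iv q₁ + s₁ / (n : ℝ)) ∨
        (s₂ = s₁ ∧ q₂ = q₁)) := by
  constructor
  · rintro ⟨C, hC⟩
    have hs := weight_le_of_embedding hn hq₁ hq₂ hC
    have hiv := iv_le_of_embedding hn hq₁ hq₂ hC
    rcases hiv.lt_or_eq with hlt | heq
    · exact .inl ⟨hs, hiv, index_lt_of_embedding hn hq₁ hq₂ hC hlt⟩
    · have hq : q₂ = q₁ :=
        le_antisymm ((iv_le_iff hq₁ hq₂).1 heq.le) ((iv_le_iff hq₂ hq₁).1 heq.ge)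
      rcases hs.lt_or_eq with hslt | hseq
      · refine .inl ⟨hs, hiv, ?_⟩
        have hn0 : (0 : ℝ) < n := by exact_mod_cast hn
        rw [heq]
        gcongr
      · exact .inr ⟨hseq, hq⟩
  · rintro (⟨hs, hiv, h⟩ | ⟨rfl, rfl⟩)
    · rcases ((iv_le_iff hq₁ hq₂).1 hiv).lt_or_eq with hlt | rfl
      · exact embedding_of_lt hn hq₂ hlt h
      · exact ⟨1, fun f _ => by simpa using Lns_mono_weight q₂ hs f⟩
    · exact ⟨1, fun f _ => by simp⟩
end

section
/- Let n ≥ 1 and s, s₁, s₂ ∈ ℝ with s > 0, s ≤ s₁ and s ≤ s₂. Then the set of exponents t ∈ (0,∞] for which sup_{k∈ℤⁿ} ‖ ⟨k⟩^s / (⟨k−j⟩^{s₁} ⟨j⟩^{s₂}) ‖_{l^t_j} is finite equals (n/(s₁+s₂−s), ∞] if s = s₁ or s = s₂, and equals [n/(s₁+s₂−s), ∞] if s < s₁ and s < s₂. Here ‖·‖_{l^t_j} denotes the l^t norm in the variable j ∈ ℤⁿ. -/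
/-!
For finite `t`, put `a = s₁ t`, `b = s₂ t`, `c = s t` and `r = a + b - c`. The question becomes
whether `∑_j ⟨k⟩^c ⟨k-j⟩^{-a} ⟨j⟩^{-b}` is bounded in `k`, and the claim compares `r` with `n`.

* If `r > n`, then `⟨k⟩ ≤ 2 max(⟨k-j⟩, ⟨j⟩)` together with
  `x^{-p} y^{-q} ≤ x^{-(p+q)} + y^{-(p+q)}` bounds each term by `2^c (⟨k-j⟩^{-r} + ⟨j⟩^{-r})`, which is
  summable with a sum independent of `k` (`bounded_supercritical`).
* If `r = n` and `c < a`, `c < b`, then `a, b < n < a + b`. The sum is split according to whether `j`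
  is near `0`, near `k`, or far from both, and the dyadic estimates
  `∑_{⟨j⟩ ≤ R} ⟨j⟩^{-b} ≲ R^{n-b}` and `∑_{⟨j⟩ ≥ R} ⟨j⟩^{-(a+b)} ≲ R^{n-a-b}` make every piece `O(1)`
  (`bounded_critical`).
* Conversely, for `⟨j⟩ ≤ ⟨k⟩` each term is at least `2^{-a} ⟨k⟩^{c-a} ⟨j⟩^{-b}`. The `M^n` points of the
  box `(M, 2M]^n`, on which `⟨j⟩ ≲ M`, then give a lower bound `≳ M^{n-r}`, so `r ≥ n`
  (`critical_of_bounded`). If `a = c`, letting `⟨k⟩ → ∞` shows that `∑_j ⟨j⟩^{-b}` converges, so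
  `b > n` (`supercritical_of_bounded`); the case `b = c` is the same after `j ↦ k - j`.

For `t = ∞` the weight quotient is always bounded.
-/

open scoped ENNReal NNReal BigOperators
open MeasureTheory

/-- The sum of the `t`-th powers: with `a = s₁ t`, `b = s₂ t`, `c = s t`, this is the `t`-th power of
the `l^t` norm of the weight quotient. -/
noncomputable def wsum (n : ℕ) (a b c : ℝ) (k : Fin n → ℤ) : ℝ≥0∞ :=
  ∑' j : Fin n → ℤ, ENNReal.ofReal (zbr k ^ c / (zbr (k - j) ^ a * zbr j ^ b))

/-! ### The Japanese bracket -/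

lemma one_le_zbr {n : ℕ} (k : Fin n → ℤ) : 1 ≤ zbr k := by
  unfold zbr
  rw [Real.one_le_sqrt]
  have : 0 ≤ ∑ i, ((k i : ℝ)) ^ 2 := Finset.sum_nonneg fun i _ => sq_nonneg _
  linarith

lemma zbr_pos {n : ℕ} (k : Fin n → ℤ) : 0 < zbr k := lt_of_lt_of_le one_pos (one_le_zbr k)

lemma zbr_sq {n : ℕ} (k : Fin n → ℤ) : zbr k ^ 2 = 1 + ∑ i, ((k i : ℝ)) ^ 2 := by
  unfold zbr
  apply Real.sq_sqrt
  have : 0 ≤ ∑ i, ((k i : ℝ)) ^ 2 := Finset.sum_nonneg fun i _ => sq_nonneg _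
  linarith

lemma abs_le_zbr {n : ℕ} (k : Fin n → ℤ) (i : Fin n) : |(k i : ℝ)| ≤ zbr k := by
  apply abs_le_of_sq_le_sq _ (zbr_pos k).le
  rw [zbr_sq]
  have := Finset.single_le_sum (f := fun i => ((k i : ℝ)) ^ 2) (fun i _ => sq_nonneg _)
    (Finset.mem_univ i)
  linarith

/-- Quasi-triangle inequality for the bracket. -/
lemma zbr_sub_le {n : ℕ} (x y : Fin n → ℤ) : zbr (x - y) ≤ 2 * max (zbr x) (zbr y) := by
  have h : zbr (x - y) ^ 2 ≤ 2 * zbr x ^ 2 + 2 * zbr y ^ 2 := by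
    rw [zbr_sq, zbr_sq, zbr_sq]
    have : ∑ i, (((x - y) i : ℤ) : ℝ) ^ 2 ≤
        2 * ∑ i, ((x i : ℝ)) ^ 2 + 2 * ∑ i, ((y i : ℝ)) ^ 2 := by
      rw [Finset.mul_sum, Finset.mul_sum, ← Finset.sum_add_distrib]
      refine Finset.sum_le_sum fun i _ => ?_
      simp only [Pi.sub_apply, Int.cast_sub]
      nlinarith [sq_nonneg ((x i : ℝ) + y i)]
    linarith
  have hx := zbr_pos x
  have hy := zbr_pos y
  have h1 := le_max_left (zbr x) (zbr y)
  have h2 := le_max_right (zbr x) (zbr y)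
  apply le_of_sq_le_sq _ (by positivity)
  nlinarith

lemma zbr_neg {n : ℕ} (x : Fin n → ℤ) : zbr (-x) = zbr x := by
  simp [zbr]

lemma zbr_le_or {n : ℕ} (k j : Fin n → ℤ) : zbr k ≤ 2 * zbr (k - j) ∨ zbr k ≤ 2 * zbr j := by
  have h := zbr_sub_le (k - j) (-j)
  rw [sub_neg_eq_add, sub_add_cancel, zbr_neg] at h
  rcases max_choice (zbr (k - j)) (zbr j) with h' | h' <;> rw [h'] at h <;> simp [h]

lemma zbr_mono {n : ℕ} {j k : Fin n → ℤ} (h : ∀ i, |(j i : ℝ)| ≤ |(k i : ℝ)|) :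
    zbr j ≤ zbr k := by
  unfold zbr
  apply Real.sqrt_le_sqrt
  have := Finset.sum_le_sum fun i (_ : i ∈ Finset.univ) => sq_le_sq.mpr (h i)
  linarith

lemma zbr_const_le {n : ℕ} (hn : 1 ≤ n) {M : ℕ} (hM : 1 ≤ M) :
    zbr (fun _ : Fin n => (2 * M : ℤ)) ≤ 3 * n * M := by
  apply le_of_sq_le_sq _ (by positivity)
  rw [zbr_sq]
  have h1 : (1 : ℝ) ≤ n := by exact_mod_cast hn
  have h2 : (1 : ℝ) ≤ M := by exact_mod_cast hM
  simp only [Finset.sum_const, Finset.card_univ, Fintype.card_fin, nsmul_eq_mul]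
  push_cast
  have h3 : (1 : ℝ) ≤ n * M ^ 2 := one_le_mul_of_one_le_of_one_le h1 (one_le_pow₀ h2)
  nlinarith

/-! ### Counting and dyadic sums -/

lemma tsum_sub_left {n : ℕ} (k : Fin n → ℤ) (f : (Fin n → ℤ) → ℝ≥0∞) :
    ∑' j, f (k - j) = ∑' j, f j :=
  (Equiv.subLeft k).tsum_eq f

lemma wsum_swap (n : ℕ) (a b c : ℝ) (k : Fin n → ℤ) : wsum n a b c k = wsum n b a c k := by
  unfold wsum
  rw [← tsum_sub_left k]
  simp only [sub_sub_cancel]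
  congr 1
  ext j
  rw [mul_comm]

/-- The number of lattice points in a bracket ball of radius `R` is at most `(3R)^n`; for `R < 1` the
ball is empty. -/
lemma tsum_ball_le (n : ℕ) {R : ℝ} (hR : 0 < R) :
    ∑' j : Fin n → ℤ, (if zbr j ≤ R then (1 : ℝ≥0∞) else 0) ≤ ENNReal.ofReal ((3 * R) ^ n) := by
  by_cases h1 : R < 1
  · have : ∀ j : Fin n → ℤ, (if zbr j ≤ R then (1 : ℝ≥0∞) else 0) = 0 := fun j => by
      rw [if_neg]; have := one_le_zbr j; linarith
    simp [this]
  push Not at h1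
  set N : ℤ := ⌊R⌋ with hN
  have hN0 : 0 ≤ N := Int.floor_nonneg.mpr hR.le
  set B : Finset (Fin n → ℤ) := Fintype.piFinset fun _ => Finset.Icc (-N) N with hB
  have hmem : ∀ j : Fin n → ℤ, zbr j ≤ R → j ∈ B := by
    intro j hj
    rw [hB, Fintype.mem_piFinset]
    intro i
    have h2 : |(j i : ℝ)| ≤ R := (abs_le_zbr j i).trans hj
    have h3 : |j i| ≤ N := by
      rw [hN, Int.le_floor]; push_cast; exact h2
    rw [Finset.mem_Icc]
    exact abs_le.mp h3
  rw [tsum_eq_sum (s := B) (fun j hj => if_neg fun h => hj (hmem j h))]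
  calc ∑ j ∈ B, (if zbr j ≤ R then (1 : ℝ≥0∞) else 0) ≤ ∑ j ∈ B, 1 :=
        Finset.sum_le_sum fun j _ => by split_ifs <;> simp
    _ = ENNReal.ofReal (B.card : ℝ) := by simp
    _ ≤ _ := by
        apply ENNReal.ofReal_le_ofReal
        have hc : (B.card : ℝ) = (2 * N + 1 : ℝ) ^ n := by
          rw [hB, Fintype.card_piFinset]
          simp only [Int.card_Icc, Finset.prod_const, Finset.card_univ, Fintype.card_fin]
          push_cast
          congr 1
          have : (((N + 1 - -N).toNat : ℤ) : ℝ) = ((N + 1 - -N : ℤ) : ℝ) := by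
            rw [Int.toNat_of_nonneg (by omega)]
          rw [← Int.cast_natCast, this]; push_cast; ring
        rw [hc]
        have h4 : (N : ℝ) ≤ R := Int.floor_le R
        have h5 : (0 : ℝ) ≤ N := by exact_mod_cast hN0
        apply pow_le_pow_left₀ (by positivity)
        linarith

/-- Abstract dyadic summation: if every `j` with `f j > 0` lies in some ball `⟨j⟩ ≤ ρ m` with
`f j ≤ w m`, then `∑ f` is at most the sum over `m` of `w m` times the number of points of that ball,
here assumed to be dominated by a geometric series. -/
lemma tsum_shell_le (n : ℕ) (f : (Fin n → ℤ) → ℝ) (w ρ : ℕ → ℝ) (hw : ∀ m, 0 ≤ w m)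
    (hρ : ∀ m, 0 < ρ m) (hf : ∀ j, f j ≤ 0 ∨ ∃ m, zbr j ≤ ρ m ∧ f j ≤ w m)
    {A q : ℝ} (hA : 0 ≤ A) (hq0 : 0 ≤ q) (hq1 : q < 1)
    (hwρ : ∀ m, w m * (3 * ρ m) ^ n = A * q ^ m) :
    ∑' j, ENNReal.ofReal (f j) ≤ ENNReal.ofReal (A * (1 - q)⁻¹) := by
  have hpt : ∀ j, ENNReal.ofReal (f j) ≤
      ∑' m, ENNReal.ofReal (w m) * (if zbr j ≤ ρ m then (1 : ℝ≥0∞) else 0) := by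
    intro j
    rcases hf j with h | ⟨m, h1, h2⟩
    · rw [ENNReal.ofReal_of_nonpos h]; exact zero_le
    · refine le_trans ?_ (ENNReal.le_tsum m)
      rw [if_pos h1, mul_one]
      exact ENNReal.ofReal_le_ofReal h2
  calc ∑' j, ENNReal.ofReal (f j)
      ≤ ∑' j, ∑' m, ENNReal.ofReal (w m) * (if zbr j ≤ ρ m then (1 : ℝ≥0∞) else 0) :=
        ENNReal.tsum_le_tsum hpt
    _ = ∑' m, ENNReal.ofReal (w m) * ∑' j : Fin n → ℤ, (if zbr j ≤ ρ m then (1 : ℝ≥0∞) else 0) := by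
        rw [ENNReal.tsum_comm]
        simp_rw [ENNReal.tsum_mul_left]
    _ ≤ ∑' m, ENNReal.ofReal (A * q ^ m) := by
        refine ENNReal.tsum_le_tsum fun m => ?_
        rw [← hwρ m, ENNReal.ofReal_mul (hw m)]
        gcongr
        exact tsum_ball_le n (hρ m)
    _ = ENNReal.ofReal (A * (1 - q)⁻¹) := by
        rw [← ENNReal.ofReal_tsum_of_nonneg (fun m => by positivity)
          ((summable_geometric_of_lt_one hq0 hq1).mul_left A), tsum_mul_left,
          tsum_geometric_of_lt_one hq0 hq1]

/-- `⟨j⟩^{-b}` cut off to the ball `⟨j⟩ ≤ R`. -/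
noncomputable def low (n : ℕ) (b R : ℝ) (j : Fin n → ℤ) : ℝ := if zbr j ≤ R then zbr j ^ (-b) else 0

/-- `⟨j⟩^{-r}` cut off to the exterior `⟨j⟩ ≥ R`. -/
noncomputable def hi (n : ℕ) (r R : ℝ) (j : Fin n → ℤ) : ℝ := if R ≤ zbr j then zbr j ^ (-r) else 0

lemma low_nonneg (n : ℕ) (b R : ℝ) (j : Fin n → ℤ) : 0 ≤ low n b R j := by
  have := zbr_pos j
  unfold low; split_ifs <;> positivity

lemma hi_nonneg (n : ℕ) (b R : ℝ) (j : Fin n → ℤ) : 0 ≤ hi n b R j := by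
  have := zbr_pos j
  unfold hi; split_ifs <;> positivity

lemma tsum_low_le (n : ℕ) {b : ℝ} (hb0 : 0 ≤ b) (hb : b < n) :
    ∃ C : ℝ, 0 ≤ C ∧ ∀ R : ℝ, 0 < R →
      ∑' j, ENNReal.ofReal (low n b R j) ≤ ENNReal.ofReal (C * R ^ ((n : ℝ) - b)) := by
  set q : ℝ := 2 ^ (b - n) with hq
  have hq0 : 0 < q := by positivity
  have hq1 : q < 1 := Real.rpow_lt_one_of_one_lt_of_neg (by norm_num) (by linarith)
  have h1q : 0 < 1 - q := by linarith
  refine ⟨3 ^ n * 2 ^ b * (1 - q)⁻¹, by positivity, fun R hR => ?_⟩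
  have := tsum_shell_le n (low n b R) (fun m => (R / 2 ^ (m + 1)) ^ (-b)) (fun m => R / 2 ^ m)
    (fun m => by positivity) (fun m => by positivity) ?_ (A := 3 ^ n * 2 ^ b * R ^ ((n : ℝ) - b))
    (by positivity) hq0.le hq1 ?_
  · refine this.trans (le_of_eq ?_)
    congr 1; ring
  · intro j
    have hj := zbr_pos j
    unfold low
    split_ifs with h
    · right
      obtain ⟨m, h1, h2⟩ := exists_nat_pow_near (x := R / zbr j) (y := 2)
        ((one_le_div hj).mpr h) (by norm_num)
      refine ⟨m, ?_, ?_⟩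
      · rw [le_div_iff₀ hj] at h1
        rw [le_div_iff₀ (by positivity)]; linarith
      · rw [div_lt_iff₀ hj] at h2
        apply Real.rpow_le_rpow_of_nonpos (by positivity) _ (by linarith)
        rw [div_le_iff₀ (by positivity)]; linarith
    · left; exact le_rfl
  · intro m
    have e1 : ((2 : ℝ) ^ (m + 1)) ^ (-b) = 2 ^ (-b) * ((2 : ℝ) ^ (-b)) ^ m := by
      rw [← Real.rpow_natCast, ← Real.rpow_mul (by norm_num), ← Real.rpow_natCast,
        ← Real.rpow_mul (by norm_num), ← Real.rpow_add (by norm_num)]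
      congr 1; push_cast; ring
    have e2 : q = 2 ^ b / 2 ^ n := by rw [hq, Real.rpow_sub (by norm_num), Real.rpow_natCast]
    have e3 : R ^ ((n : ℝ) - b) = R ^ n / R ^ b := by rw [Real.rpow_sub hR, Real.rpow_natCast]
    rw [Real.div_rpow hR.le (by positivity), e1, e2, e3, Real.rpow_neg hR.le,
      Real.rpow_neg (by norm_num), mul_pow, div_pow, div_pow, inv_pow, ← pow_mul, ← pow_mul,
      mul_comm m n]
    have := Real.rpow_pos_of_pos hR b
    have : (0 : ℝ) < 2 ^ b := by positivity
    field_simp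

lemma tsum_hi_le (n : ℕ) {r : ℝ} (hr : n < r) :
    ∃ C : ℝ, 0 ≤ C ∧ ∀ R : ℝ, 0 < R →
      ∑' j, ENNReal.ofReal (hi n r R j) ≤ ENNReal.ofReal (C * R ^ ((n : ℝ) - r)) := by
  have hr0 : 0 < r := lt_of_le_of_lt (Nat.cast_nonneg n) hr
  set q : ℝ := 2 ^ (n - r) with hq
  have hq0 : 0 < q := by positivity
  have hq1 : q < 1 := Real.rpow_lt_one_of_one_lt_of_neg (by norm_num) (by linarith)
  have h1q : 0 < 1 - q := by linarith
  refine ⟨6 ^ n * (1 - q)⁻¹, by positivity, fun R hR => ?_⟩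
  have := tsum_shell_le n (hi n r R) (fun m => (R * 2 ^ m) ^ (-r)) (fun m => R * 2 ^ (m + 1))
    (fun m => by positivity) (fun m => by positivity) ?_ (A := 6 ^ n * R ^ ((n : ℝ) - r))
    (by positivity) hq0.le hq1 ?_
  · refine this.trans (le_of_eq ?_)
    congr 1; ring
  · intro j
    have hj := zbr_pos j
    unfold hi
    split_ifs with h
    · right
      obtain ⟨m, h1, h2⟩ := exists_nat_pow_near (x := zbr j / R) (y := 2)
        ((one_le_div hR).mpr h) (by norm_num)
      refine ⟨m, ?_, ?_⟩
      · rw [div_lt_iff₀ hR] at h2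
        linarith
      · rw [le_div_iff₀ hR] at h1
        apply Real.rpow_le_rpow_of_nonpos (by positivity) _ (by linarith)
        linarith
    · left; exact le_rfl
  · intro m
    have e1 : ((2 : ℝ) ^ m) ^ (-r) = ((2 : ℝ) ^ (-r)) ^ m := by
      rw [← Real.rpow_natCast, ← Real.rpow_mul (by norm_num), ← Real.rpow_natCast,
        ← Real.rpow_mul (by norm_num)]
      congr 1; ring
    have e2 : q = 2 ^ n / 2 ^ r := by rw [hq, Real.rpow_sub (by norm_num), Real.rpow_natCast]
    have e3 : R ^ ((n : ℝ) - r) = R ^ n / R ^ r := by rw [Real.rpow_sub hR, Real.rpow_natCast]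
    have e4 : (6 : ℝ) ^ n = 3 ^ n * 2 ^ n := by rw [← mul_pow]; norm_num
    rw [Real.mul_rpow hR.le (by positivity), e1, e2, e3, e4, Real.rpow_neg hR.le,
      Real.rpow_neg (by norm_num), mul_pow, mul_pow, div_pow, inv_pow, ← pow_mul, ← pow_mul,
      add_mul, pow_add, one_mul, mul_comm m n]
    have := Real.rpow_pos_of_pos hR r
    have : (0 : ℝ) < 2 ^ r := by positivity
    field_simp

/-! ### Upper bounds -/

lemma young_neg {x y p q : ℝ} (hx : 0 < x) (hy : 0 < y) (hp : 0 ≤ p) (hq : 0 ≤ q) :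
    x ^ (-p) * y ^ (-q) ≤ x ^ (-(p + q)) + y ^ (-(p + q)) := by
  have hX : 0 < x ^ (-(p + q)) := by positivity
  have hY : 0 < y ^ (-(p + q)) := by positivity
  rcases le_total x y with h | h
  · have h1 : y ^ (-q) ≤ x ^ (-q) := Real.rpow_le_rpow_of_nonpos hx h (by linarith)
    have h2 : x ^ (-(p + q)) = x ^ (-p) * x ^ (-q) := by rw [← Real.rpow_add hx]; congr 1; ring
    have h3 : x ^ (-p) * y ^ (-q) ≤ x ^ (-p) * x ^ (-q) := by gcongr
    linarith
  · have h1 : x ^ (-p) ≤ y ^ (-p) := Real.rpow_le_rpow_of_nonpos hy h (by linarith)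
    have h2 : y ^ (-(p + q)) = y ^ (-p) * y ^ (-q) := by rw [← Real.rpow_add hy]; congr 1; ring
    have h3 : x ^ (-p) * y ^ (-q) ≤ y ^ (-p) * y ^ (-q) := by gcongr
    linarith

lemma div_eq_neg_rpow {R x y a b c : ℝ} (hx : 0 < x) (hy : 0 < y) :
    R ^ c / (x ^ a * y ^ b) = R ^ c * (x ^ (-a) * y ^ (-b)) := by
  rw [Real.rpow_neg hx.le, Real.rpow_neg hy.le, ← mul_inv, div_eq_mul_inv]

lemma term_le_supercritical {R x y a b c : ℝ} (hR : 0 < R) (hx : 0 < x) (hy : 0 < y)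
    (h : R ≤ 2 * x ∨ R ≤ 2 * y) (hc : 0 ≤ c) (ha : c ≤ a) (hb : c ≤ b) :
    R ^ c / (x ^ a * y ^ b) ≤ 2 ^ c * x ^ (-(a + b - c)) + 2 ^ c * y ^ (-(a + b - c)) := by
  rw [div_eq_neg_rpow hx hy]
  have key : R ^ c * (x ^ (-a) * y ^ (-b)) ≤ 2 ^ c * (x ^ (-(a - c)) * y ^ (-b)) ∨
      R ^ c * (x ^ (-a) * y ^ (-b)) ≤ 2 ^ c * (x ^ (-a) * y ^ (-(b - c))) := by
    rcases h with h | h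
    · left
      have h1 : R ^ c ≤ (2 * x) ^ c := Real.rpow_le_rpow hR.le h hc
      rw [Real.mul_rpow (by norm_num) hx.le] at h1
      have h2 : x ^ (-(a - c)) = x ^ c * x ^ (-a) := by rw [← Real.rpow_add hx]; congr 1; ring
      rw [h2]
      calc _ ≤ (2 ^ c * x ^ c) * (x ^ (-a) * y ^ (-b)) := by gcongr
        _ = _ := by ring
    · right
      have h1 : R ^ c ≤ (2 * y) ^ c := Real.rpow_le_rpow hR.le h hc
      rw [Real.mul_rpow (by norm_num) hy.le] at h1
      have h2 : y ^ (-(b - c)) = y ^ c * y ^ (-b) := by rw [← Real.rpow_add hy]; congr 1; ring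
      rw [h2]
      calc _ ≤ (2 ^ c * y ^ c) * (x ^ (-a) * y ^ (-b)) := by gcongr
        _ = _ := by ring
  have h2c : (0 : ℝ) < 2 ^ c := by positivity
  rw [← mul_add]
  rcases key with k | k
  · refine k.trans (mul_le_mul_of_nonneg_left ?_ h2c.le)
    have := young_neg hx hy (sub_nonneg.mpr ha) (hc.trans hb)
    rwa [show a - c + b = a + b - c by ring] at this
  · refine k.trans (mul_le_mul_of_nonneg_left ?_ h2c.le)
    have := young_neg hx hy (hc.trans ha) (sub_nonneg.mpr hb)
    rwa [show a + (b - c) = a + b - c by ring] at this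

lemma bounded_supercritical (n : ℕ) {a b c : ℝ} (hc : 0 ≤ c) (ha : c ≤ a) (hb : c ≤ b)
    (hr : n < a + b - c) : ∃ C : ℝ≥0, ∀ k : Fin n → ℤ, wsum n a b c k ≤ C := by
  obtain ⟨D, hD, hD'⟩ := tsum_hi_le n hr
  have hD1 := hD' 1 one_pos
  simp only [Real.one_rpow, mul_one] at hD1
  have hhi : ∀ j, hi n (a + b - c) 1 j = zbr j ^ (-(a + b - c)) := fun j => if_pos (one_le_zbr j)
  simp only [hhi] at hD1
  refine ⟨(2 * (2 ^ c * D)).toNNReal, fun k => ?_⟩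
  unfold wsum
  have h2c : (0 : ℝ) ≤ 2 ^ c := by positivity
  calc _ ≤ ∑' j : Fin n → ℤ, (ENNReal.ofReal (2 ^ c) * ENNReal.ofReal (zbr (k - j) ^ (-(a + b - c)))
          + ENNReal.ofReal (2 ^ c) * ENNReal.ofReal (zbr j ^ (-(a + b - c)))) := by
        refine ENNReal.tsum_le_tsum fun j => ?_
        have hx := zbr_pos (k - j)
        have hy := zbr_pos j
        rw [← ENNReal.ofReal_mul h2c, ← ENNReal.ofReal_mul h2c,
          ← ENNReal.ofReal_add (by positivity) (by positivity)]
        exact ENNReal.ofReal_le_ofReal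
          (term_le_supercritical (zbr_pos k) hx hy (zbr_le_or k j) hc ha hb)
    _ ≤ ENNReal.ofReal (2 ^ c) * ENNReal.ofReal D + ENNReal.ofReal (2 ^ c) * ENNReal.ofReal D := by
        rw [ENNReal.tsum_add, ENNReal.tsum_mul_left, ENNReal.tsum_mul_left,
          tsum_sub_left k (fun j => ENNReal.ofReal (zbr j ^ (-(a + b - c))))]
        gcongr
    _ = _ := by
        rw [← two_mul, ← ENNReal.ofReal_mul h2c]
        change _ = ENNReal.ofReal _
        rw [ENNReal.ofReal_mul (by norm_num : (0 : ℝ) ≤ 2)]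
        simp

/-- The three-region splitting: `j` near `0`, `j` near `k`, and `j` far from both. -/
lemma term_le_critical {n : ℕ} (k j : Fin n → ℤ) {a b c : ℝ} (ha : 0 ≤ a) (hb : 0 ≤ b) :
    zbr k ^ c / (zbr (k - j) ^ a * zbr j ^ b) ≤
      (2 ^ a * zbr k ^ (c - a)) * low n b (zbr k) j +
      (2 ^ b * zbr k ^ (c - b)) * low n a (zbr k) (k - j) +
      (zbr k ^ c * hi n (a + b) (zbr k / 2) j +
        zbr k ^ c * hi n (a + b) (zbr k / 2) (k - j)) := by
  have hR := zbr_pos k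
  have hx := zbr_pos (k - j)
  have hy := zbr_pos j
  have n1 := low_nonneg n b (zbr k) j
  have n2 := low_nonneg n a (zbr k) (k - j)
  have n3 := hi_nonneg n (a + b) (zbr k / 2) j
  have n4 := hi_nonneg n (a + b) (zbr k / 2) (k - j)
  have m1 : 0 ≤ (2 ^ a * zbr k ^ (c - a)) * low n b (zbr k) j := by positivity
  have m2 : 0 ≤ (2 ^ b * zbr k ^ (c - b)) * low n a (zbr k) (k - j) := by positivity
  have m3 : 0 ≤ zbr k ^ c * hi n (a + b) (zbr k / 2) j := by positivity
  have m4 : 0 ≤ zbr k ^ c * hi n (a + b) (zbr k / 2) (k - j) := by positivity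
  have half : ∀ {x e : ℝ}, 0 ≤ e → zbr k / 2 ≤ x → zbr k ^ c * x ^ (-e) ≤
      2 ^ e * zbr k ^ (c - e) := by
    intro x e he hxe
    have h1 : x ^ (-e) ≤ (zbr k / 2) ^ (-e) :=
      Real.rpow_le_rpow_of_nonpos (by positivity) hxe (by linarith)
    rw [Real.div_rpow hR.le (by norm_num), Real.rpow_neg (by norm_num : (0 : ℝ) ≤ 2),
      div_inv_eq_mul] at h1
    rw [sub_eq_add_neg, Real.rpow_add hR]
    calc _ ≤ zbr k ^ c * (zbr k ^ (-e) * 2 ^ e) := by gcongr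
      _ = _ := by ring
  rw [div_eq_neg_rpow hx hy]
  by_cases h1 : zbr k / 2 ≤ zbr (k - j)
  · by_cases h2 : zbr k / 2 ≤ zbr j
    · have := young_neg hx hy ha hb
      have e1 : hi n (a + b) (zbr k / 2) j = zbr j ^ (-(a + b)) := if_pos h2
      have e2 : hi n (a + b) (zbr k / 2) (k - j) = zbr (k - j) ^ (-(a + b)) := if_pos h1
      have : zbr k ^ c * (zbr (k - j) ^ (-a) * zbr j ^ (-b)) ≤
        zbr k ^ c * (zbr (k - j) ^ (-(a + b)) + zbr j ^ (-(a + b))) := by gcongr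
      rw [mul_add] at this
      rw [e1] at *
      rw [e2] at *
      linarith
    · have e1 : low n b (zbr k) j = zbr j ^ (-b) := if_pos (by linarith)
      have := mul_le_mul_of_nonneg_right (half ha h1) (Real.rpow_nonneg hy.le (-b))
      rw [e1] at *
      linarith
  · have h2 : zbr k / 2 ≤ zbr j := by rcases zbr_le_or k j with h | h <;> linarith
    have e1 : low n a (zbr k) (k - j) = zbr (k - j) ^ (-a) := if_pos (by linarith)
    have := mul_le_mul_of_nonneg_right (half hb h2) (Real.rpow_nonneg hx.le (-a))
    rw [e1] at *
    linarith

lemma bounded_critical (n : ℕ) {a b c : ℝ} (hc : 0 < c) (ha : c < a) (hb : c < b)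
    (hr : a + b - c = n) : ∃ C : ℝ≥0, ∀ k : Fin n → ℤ, wsum n a b c k ≤ C := by
  obtain ⟨A, hA, hA'⟩ := tsum_low_le n (b := a) (by linarith) (by linarith)
  obtain ⟨B, hB, hB'⟩ := tsum_low_le n (b := b) (by linarith) (by linarith)
  obtain ⟨D, hD, hD'⟩ := tsum_hi_le n (r := a + b) (by linarith)
  refine ⟨(2 ^ a * B).toNNReal + (2 ^ b * A).toNNReal +
    ((D * 2 ^ c).toNNReal + (D * 2 ^ c).toNNReal), fun k => ?_⟩
  have hR := zbr_pos k
  have c1 : (0 : ℝ) ≤ 2 ^ a * zbr k ^ (c - a) := by positivity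
  have c2 : (0 : ℝ) ≤ 2 ^ b * zbr k ^ (c - b) := by positivity
  have c3 : (0 : ℝ) ≤ zbr k ^ c := by positivity
  have hlow : ∀ {e E f : ℝ}, 0 ≤ E → 0 ≤ f → c - f + (n - e) = 0 →
      (∀ R : ℝ, 0 < R → ∑' j, ENNReal.ofReal (low n e R j) ≤
        ENNReal.ofReal (E * R ^ ((n : ℝ) - e))) →
      ENNReal.ofReal (2 ^ f * zbr k ^ (c - f)) * ∑' j, ENNReal.ofReal (low n e (zbr k) j) ≤
        ENNReal.ofReal (2 ^ f * E) := by
    intro e E f hE hf he h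
    refine (mul_le_mul_right (h _ hR) _).trans ?_
    rw [← ENNReal.ofReal_mul (by positivity)]
    apply le_of_eq
    congr 1
    have : zbr k ^ (c - f) * zbr k ^ (n - e) = 1 := by
      rw [← Real.rpow_add hR, he, Real.rpow_zero]
    linear_combination 2 ^ f * E * this
  have hhi : ENNReal.ofReal (zbr k ^ c) * ∑' j, ENNReal.ofReal (hi n (a + b) (zbr k / 2) j) ≤
      ENNReal.ofReal (D * 2 ^ c) := by
    refine (mul_le_mul_right (hD' _ (half_pos hR)) _).trans ?_
    rw [← ENNReal.ofReal_mul (by positivity)]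
    apply le_of_eq
    congr 1
    rw [show (n : ℝ) - (a + b) = -c by linarith, Real.div_rpow hR.le (by norm_num),
      Real.rpow_neg hR.le, Real.rpow_neg (by norm_num)]
    field_simp
  unfold wsum
  calc _ ≤ ∑' j : Fin n → ℤ,
        (ENNReal.ofReal (2 ^ a * zbr k ^ (c - a)) * ENNReal.ofReal (low n b (zbr k) j) +
        ENNReal.ofReal (2 ^ b * zbr k ^ (c - b)) * ENNReal.ofReal (low n a (zbr k) (k - j)) +
        (ENNReal.ofReal (zbr k ^ c) * ENNReal.ofReal (hi n (a + b) (zbr k / 2) j) +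
        ENNReal.ofReal (zbr k ^ c) * ENNReal.ofReal (hi n (a + b) (zbr k / 2) (k - j)))) := by
        refine ENNReal.tsum_le_tsum fun j => ?_
        have n1 := low_nonneg n b (zbr k) j
        have n2 := low_nonneg n a (zbr k) (k - j)
        have n3 := hi_nonneg n (a + b) (zbr k / 2) j
        have n4 := hi_nonneg n (a + b) (zbr k / 2) (k - j)
        rw [← ENNReal.ofReal_mul c1, ← ENNReal.ofReal_mul c2, ← ENNReal.ofReal_mul c3,
          ← ENNReal.ofReal_mul c3, ← ENNReal.ofReal_add (by positivity) (by positivity),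
          ← ENNReal.ofReal_add (by positivity) (by positivity),
          ← ENNReal.ofReal_add (by positivity) (by positivity)]
        exact ENNReal.ofReal_le_ofReal (term_le_critical k j (by linarith) (by linarith))
    _ ≤ ENNReal.ofReal (2 ^ a * B) + ENNReal.ofReal (2 ^ b * A) +
        (ENNReal.ofReal (D * 2 ^ c) + ENNReal.ofReal (D * 2 ^ c)) := by
        rw [ENNReal.tsum_add, ENNReal.tsum_add, ENNReal.tsum_add, ENNReal.tsum_mul_left,
          ENNReal.tsum_mul_left, ENNReal.tsum_mul_left, ENNReal.tsum_mul_left,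
          tsum_sub_left k (fun j => ENNReal.ofReal (low n a (zbr k) j)),
          tsum_sub_left k (fun j => ENNReal.ofReal (hi n (a + b) (zbr k / 2) j))]
        gcongr
        · exact hlow hB (by linarith) (by linarith) hB'
        · exact hlow hA (by linarith) (by linarith) hA'
    _ = _ := by
        push_cast
        rfl

/-! ### Lower bounds -/

/-- Valid on the ball `⟨j⟩ ≤ ⟨k⟩`, where `⟨k-j⟩ ≤ 2⟨k⟩`. -/
lemma term_ge {n : ℕ} {k j : Fin n → ℤ} (h : zbr j ≤ zbr k) {a b c : ℝ} (ha : 0 ≤ a) :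
    2 ^ (-a) * zbr k ^ (c - a) * zbr j ^ (-b) ≤ zbr k ^ c / (zbr (k - j) ^ a * zbr j ^ b) := by
  have hR := zbr_pos k
  have hx := zbr_pos (k - j)
  have hy := zbr_pos j
  have h1 : zbr (k - j) ≤ 2 * zbr k := by
    have := zbr_sub_le k j
    rwa [max_eq_left h] at this
  have h2 : (2 * zbr k) ^ (-a) ≤ zbr (k - j) ^ (-a) :=
    Real.rpow_le_rpow_of_nonpos hx h1 (by linarith)
  rw [Real.mul_rpow (by norm_num) hR.le] at h2
  rw [div_eq_neg_rpow hx hy, sub_eq_add_neg, Real.rpow_add hR]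
  calc _ = zbr k ^ c * ((2 ^ (-a) * zbr k ^ (-a)) * zbr j ^ (-b)) := by ring
    _ ≤ _ := by gcongr

/-- The box `(M, 2M]^n` of `M^n` lattice points, at distance comparable to `M` from the origin. -/
noncomputable def box (n M : ℕ) : Finset (Fin n → ℤ) := Fintype.piFinset fun _ => Finset.Ioc (M : ℤ) (2 * M)

lemma card_box (n M : ℕ) : (box n M).card = M ^ n := by
  rw [box, Fintype.card_piFinset]
  simp only [Int.card_Ioc, Finset.prod_const, Finset.card_univ, Fintype.card_fin]
  congr 1
  omega

lemma zbr_box_le {n M : ℕ} {j : Fin n → ℤ} (hj : j ∈ box n M) :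
    zbr j ≤ zbr (fun _ : Fin n => (2 * M : ℤ)) := by
  apply zbr_mono
  intro i
  rw [box, Fintype.mem_piFinset] at hj
  have := Finset.mem_Ioc.mp (hj i)
  have h : |j i| ≤ |(2 * M : ℤ)| := by
    rw [abs_of_nonneg (by omega), abs_of_nonneg (by omega)]; omega
  exact_mod_cast h

lemma critical_of_bounded (n : ℕ) (hn : 1 ≤ n) {a b c : ℝ} (ha : 0 ≤ a) (hb : 0 ≤ b)
    (hr0 : 0 ≤ a + b - c) (C : ℝ≥0) (hC : ∀ k : Fin n → ℤ, wsum n a b c k ≤ C) :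
    n ≤ a + b - c := by
  by_contra! hr
  set r := a + b - c with hrdef
  have hn' : (0 : ℝ) < n := by exact_mod_cast hn
  have key : ∀ M : ℕ, 1 ≤ M → (M : ℝ) ^ ((n : ℝ) - r) ≤ C * 2 ^ a * (3 * n) ^ r := by
    intro M hM
    have hM' : (0 : ℝ) < M := by exact_mod_cast hM
    set k : Fin n → ℤ := fun _ => (2 * M : ℤ) with hk
    have hR := zbr_pos k
    have hRle : zbr k ≤ 3 * n * M := zbr_const_le hn hM
    have h1 : ∀ j ∈ box n M, 2 ^ (-a) * (3 * n * M : ℝ) ^ (-r) ≤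
        zbr k ^ c / (zbr (k - j) ^ a * zbr j ^ b) := by
      intro j hj
      have hjk : zbr j ≤ zbr k := zbr_box_le hj
      refine le_trans ?_ (term_ge hjk ha)
      have h2 : (3 * n * M : ℝ) ^ (-r) ≤ zbr k ^ (-r) :=
        Real.rpow_le_rpow_of_nonpos hR hRle (by linarith)
      have h3 : zbr k ^ (-b) ≤ zbr j ^ (-b) :=
        Real.rpow_le_rpow_of_nonpos (zbr_pos j) hjk (by linarith)
      have h4 : zbr k ^ (-r) = zbr k ^ (c - a) * zbr k ^ (-b) := by
        rw [← Real.rpow_add hR]; congr 1; rw [hrdef]; ring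
      rw [h4] at h2
      have h6 := h2.trans (mul_le_mul_of_nonneg_left h3 (Real.rpow_nonneg hR.le (c - a)))
      rw [mul_assoc (2 ^ (-a))]
      exact mul_le_mul_of_nonneg_left h6 (Real.rpow_nonneg (by norm_num) _)
    have h5 : ENNReal.ofReal ((M : ℝ) ^ n * (2 ^ (-a) * (3 * n * M : ℝ) ^ (-r))) ≤ C := by
      calc _ = ∑ j ∈ box n M, ENNReal.ofReal (2 ^ (-a) * (3 * n * M : ℝ) ^ (-r)) := by
            rw [Finset.sum_const, card_box, nsmul_eq_mul, ENNReal.ofReal_mul (by positivity)]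
            congr 1
            rw [← Nat.cast_pow, ENNReal.ofReal_natCast]
        _ ≤ ∑ j ∈ box n M, ENNReal.ofReal (zbr k ^ c / (zbr (k - j) ^ a * zbr j ^ b)) :=
            Finset.sum_le_sum fun j hj => ENNReal.ofReal_le_ofReal (h1 j hj)
        _ ≤ wsum n a b c k := ENNReal.sum_le_tsum _
        _ ≤ C := hC k
    rw [← ENNReal.ofReal_coe_nnreal, ENNReal.ofReal_le_ofReal_iff C.coe_nonneg,
      Real.mul_rpow (by positivity) hM'.le, Real.rpow_neg (by norm_num),
      Real.rpow_neg (by positivity), Real.rpow_neg hM'.le] at h5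
    rw [Real.rpow_sub hM', Real.rpow_natCast]
    have p1 : (0 : ℝ) < 2 ^ a := by positivity
    have p2 : (0 : ℝ) < (3 * n) ^ r := by positivity
    calc (M : ℝ) ^ n / M ^ r = ((M : ℝ) ^ n * ((2 ^ a)⁻¹ * (((3 * n : ℝ) ^ r)⁻¹ * ((M : ℝ) ^ r)⁻¹))) *
          (2 ^ a * (3 * n : ℝ) ^ r) := by field_simp
      _ ≤ C * (2 ^ a * (3 * n : ℝ) ^ r) := by gcongr
      _ = _ := by ring
  have ht := (tendsto_rpow_atTop (y := (n : ℝ) - r) (by linarith)).comp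
    (tendsto_natCast_atTop_atTop (R := ℝ))
  obtain ⟨M, hM1, hM2⟩ := ((ht.eventually_gt_atTop (C * 2 ^ a * (3 * n) ^ r)).and
    (Filter.eventually_ge_atTop 1)).exists
  exact absurd (key M hM2) (not_le.mpr hM1)

lemma not_summable_zbr (n : ℕ) (hn : 1 ≤ n) {b : ℝ} (hb : b ≤ n) :
    ¬ Summable fun j : Fin n → ℤ => zbr j ^ (-b) := by
  intro hs
  have hn' : (0 : ℝ) < n := by exact_mod_cast hn
  -- Cauchy criterion, tested on a box far from the origin.
  obtain ⟨s, hs'⟩ := summable_iff_vanishing_norm.mp hs ((3 * n : ℝ) ^ (-(n : ℝ))) (by positivity)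
  obtain ⟨M, hM1, hM⟩ : ∃ M : ℕ, 1 ≤ M ∧ ∀ j ∈ s, zbr j ≤ M := by
    obtain ⟨x, hx⟩ := (s.image zbr).bddAbove
    obtain ⟨M, hM⟩ := exists_nat_ge (max x 1)
    refine ⟨M, by exact_mod_cast (le_max_right _ _).trans hM, fun j hj => ?_⟩
    exact (hx (Finset.mem_coe.mpr (Finset.mem_image_of_mem _ hj))).trans
      ((le_max_left _ _).trans hM)
  have hM' : (0 : ℝ) < M := by exact_mod_cast hM1
  have hdis : Disjoint (box n M) s := by
    rw [Finset.disjoint_left]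
    intro j hj hjs
    rw [box, Fintype.mem_piFinset] at hj
    have h1 := (Finset.mem_Ioc.mp (hj ⟨0, hn⟩)).1
    have h2 := (le_abs_self _).trans ((abs_le_zbr j ⟨0, hn⟩).trans (hM j hjs))
    have h3 : j ⟨0, hn⟩ ≤ M := by exact_mod_cast h2
    omega
  have h := hs' _ hdis
  have h4 : (3 * n : ℝ) ^ (-(n : ℝ)) ≤ ∑ j ∈ box n M, zbr j ^ (-b) := by
    calc (3 * n : ℝ) ^ (-(n : ℝ)) = ∑ j ∈ box n M, (3 * n * M : ℝ) ^ (-(n : ℝ)) := by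
          rw [Finset.sum_const, card_box, nsmul_eq_mul, Real.mul_rpow (by positivity) hM'.le,
            Real.rpow_neg hM'.le, Real.rpow_natCast]
          push_cast
          field_simp
      _ ≤ _ := by
          refine Finset.sum_le_sum fun j hj => ?_
          have h5 : zbr j ≤ 3 * n * M := (zbr_box_le hj).trans (zbr_const_le hn hM1)
          calc _ ≤ zbr j ^ (-(n : ℝ)) :=
                Real.rpow_le_rpow_of_nonpos (zbr_pos j) h5 (by linarith)
            _ ≤ _ := Real.rpow_le_rpow_of_exponent_le (one_le_zbr j) (by linarith)
  rw [Real.norm_eq_abs] at h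
  exact absurd (h4.trans (le_abs_self _)) (not_le.mpr h)

lemma supercritical_of_bounded (n : ℕ) (hn : 1 ≤ n) {a b : ℝ} (ha : 0 ≤ a)
    (C : ℝ≥0) (hC : ∀ k : Fin n → ℤ, wsum n a b a k ≤ C) : n < b := by
  by_contra! hb
  refine not_summable_zbr n hn hb ?_
  refine summable_of_sum_le (c := 2 ^ a * C) (fun j => Real.rpow_nonneg (zbr_pos j).le _) fun F => ?_
  -- A frequency `k` dominating every element of `F`; there the weight is at least `2^{-a}⟨j⟩^{-b}`.
  obtain ⟨k, hk⟩ : ∃ k : Fin n → ℤ, ∀ j ∈ F, zbr j ≤ zbr k := by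
    obtain ⟨x, hx⟩ := (F.image zbr).bddAbove
    obtain ⟨M, hM⟩ := exists_nat_ge x
    refine ⟨fun _ => M, fun j hj => ?_⟩
    have h1 := abs_le_zbr (fun _ : Fin n => (M : ℤ)) ⟨0, hn⟩
    simp only [Int.cast_natCast, Nat.abs_cast] at h1
    exact (hx (Finset.mem_coe.mpr (Finset.mem_image_of_mem _ hj))).trans (hM.trans h1)
  have h : ENNReal.ofReal (∑ j ∈ F, 2 ^ (-a) * zbr j ^ (-b)) ≤ C := by
    rw [ENNReal.ofReal_sum_of_nonneg
      (fun j _ => mul_nonneg (by positivity) (Real.rpow_nonneg (zbr_pos j).le _))]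
    calc _ ≤ ∑ j ∈ F, ENNReal.ofReal (zbr k ^ a / (zbr (k - j) ^ a * zbr j ^ b)) := by
          refine Finset.sum_le_sum fun j hj => ENNReal.ofReal_le_ofReal ?_
          have := term_ge (hk j hj) (b := b) (c := a) ha
          rwa [sub_self, Real.rpow_zero, mul_one] at this
      _ ≤ wsum n a b a k := ENNReal.sum_le_tsum _
      _ ≤ C := hC k
  rw [← ENNReal.ofReal_coe_nnreal, ENNReal.ofReal_le_ofReal_iff C.coe_nonneg, ← Finset.mul_sum,
    Real.rpow_neg (by norm_num)] at h
  rwa [inv_mul_le_iff₀ (by positivity)] at h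

/-! ### The norm and its power sum -/

lemma lns_bounded_iff (n : ℕ) (s s₁ s₂ : ℝ) {t : ℝ≥0∞} (ht : 0 < t) (ht' : t ≠ ∞) :
    (∃ C : ℝ≥0, ∀ k : Fin n → ℤ,
      lns n t 0 (fun j => ENNReal.ofReal (zbr k ^ s / (zbr (k - j) ^ s₁ * zbr j ^ s₂))) ≤ C) ↔
    ∃ C : ℝ≥0, ∀ k : Fin n → ℤ, wsum n (s₁ * t.toReal) (s₂ * t.toReal) (s * t.toReal) k ≤ C := by
  have hτ : 0 < t.toReal := ENNReal.toReal_pos ht.ne' ht'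
  set τ := t.toReal with hτdef
  have key : ∀ k : Fin n → ℤ,
      lns n t 0 (fun j => ENNReal.ofReal (zbr k ^ s / (zbr (k - j) ^ s₁ * zbr j ^ s₂))) =
      wsum n (s₁ * τ) (s₂ * τ) (s * τ) k ^ (1 / τ) := by
    intro k
    unfold lns wsum
    rw [if_neg ht']
    congr 1
    refine tsum_congr fun j => ?_
    have hR := zbr_pos k
    have hx := zbr_pos (k - j)
    have hy := zbr_pos j
    rw [Real.rpow_zero, ENNReal.ofReal_one, mul_one, ← hτdef,
      ENNReal.ofReal_rpow_of_nonneg (by positivity) hτ.le,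
      Real.div_rpow (by positivity) (by positivity), Real.mul_rpow (by positivity) (by positivity),
      ← Real.rpow_mul hR.le, ← Real.rpow_mul hx.le, ← Real.rpow_mul hy.le]
  simp only [key]
  constructor
  · rintro ⟨C, hC⟩
    refine ⟨C ^ τ, fun k => ?_⟩
    have := hC k
    rwa [one_div, ENNReal.rpow_inv_le_iff hτ, ← ENNReal.coe_rpow_of_nonneg _ hτ.le] at this
  · rintro ⟨C, hC⟩
    refine ⟨C ^ (1 / τ), fun k => ?_⟩
    rw [ENNReal.coe_rpow_of_nonneg _ (by positivity)]
    exact ENNReal.rpow_le_rpow (hC k) (by positivity)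

/-- For `t = ∞` the weight quotient is bounded by `2^s`. -/
lemma lns_top_bounded (n : ℕ) {s s₁ s₂ : ℝ} (hs : 0 < s) (h₁ : s ≤ s₁) (h₂ : s ≤ s₂) :
    ∃ C : ℝ≥0, ∀ k : Fin n → ℤ,
      lns n ∞ 0 (fun j => ENNReal.ofReal (zbr k ^ s / (zbr (k - j) ^ s₁ * zbr j ^ s₂))) ≤ C := by
  refine ⟨(2 ^ s + 2 ^ s : ℝ).toNNReal, fun k => ?_⟩
  unfold lns
  rw [if_pos rfl]
  refine iSup_le fun j => ?_
  rw [Real.rpow_zero, ENNReal.ofReal_one, mul_one]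
  refine ENNReal.ofReal_le_ofReal ?_
  refine (term_le_supercritical (zbr_pos k) (zbr_pos _) (zbr_pos _) (zbr_le_or k j) hs.le h₁
    h₂).trans ?_
  have h3 := Real.rpow_le_one_of_one_le_of_nonpos (one_le_zbr (k - j))
    (by linarith : -(s₁ + s₂ - s) ≤ 0)
  have h4 := Real.rpow_le_one_of_one_le_of_nonpos (one_le_zbr j)
    (by linarith : -(s₁ + s₂ - s) ≤ 0)
  have : (0 : ℝ) < 2 ^ s := by positivity
  nlinarith

/-- integral capability of the weight `⟨k⟩`, discrete form.  For
`s > 0`, `s ≤ s₁`, `s ≤ s₂`, the set of `t ∈ (0,∞]` for which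
`sup_k ‖⟨k⟩^s / (⟨k-j⟩^{s₁} ⟨j⟩^{s₂})‖_{l^t_j} < ∞` is `(n/(s₁+s₂-s), ∞]` when
`s = s₁` or `s = s₂`, and `[n/(s₁+s₂-s), ∞]` when `s < s₁` and `s < s₂`. -/
theorem integral_capability_discrete
    (n : ℕ) (hn : 1 ≤ n) (s s₁ s₂ : ℝ) (hs : 0 < s) (h₁ : s ≤ s₁) (h₂ : s ≤ s₂) :
    ((s = s₁ ∨ s = s₂) → ∀ t : ℝ≥0∞, 0 < t →
      ((∃ C : ℝ≥0, ∀ k : Fin n → ℤ,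
          lns n t 0 (fun j => ENNReal.ofReal (zbr k ^ s / (zbr (k - j) ^ s₁ * zbr j ^ s₂))) ≤ C)
        ↔ ENNReal.ofReal ((n : ℝ) / (s₁ + s₂ - s)) < t)) ∧
    ((s < s₁ ∧ s < s₂) → ∀ t : ℝ≥0∞, 0 < t →
      ((∃ C : ℝ≥0, ∀ k : Fin n → ℤ,
          lns n t 0 (fun j => ENNReal.ofReal (zbr k ^ s / (zbr (k - j) ^ s₁ * zbr j ^ s₂))) ≤ C)
        ↔ ENNReal.ofReal ((n : ℝ) / (s₁ + s₂ - s)) ≤ t)) := by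
  have hσ : 0 < s₁ + s₂ - s := by linarith
  refine ⟨fun hor t ht => ?_, fun hand t ht => ?_⟩
  · rcases eq_or_ne t ∞ with rfl | ht'
    · exact iff_of_true (lns_top_bounded n hs h₁ h₂) ENNReal.ofReal_lt_top
    · have hτ : 0 < t.toReal := ENNReal.toReal_pos ht.ne' ht'
      rw [lns_bounded_iff n s s₁ s₂ ht ht', ENNReal.ofReal_lt_iff_lt_toReal (by positivity) ht',
        div_lt_iff₀ hσ]
      constructor
      · rintro ⟨C, hC⟩
        rcases hor with rfl | rfl
        · have := supercritical_of_bounded n hn (by positivity) C hC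
          linarith
        · have hC' : ∀ k, wsum n (s * t.toReal) (s₁ * t.toReal) (s * t.toReal) k ≤ C :=
            fun k => by rw [wsum_swap]; exact hC k
          have := supercritical_of_bounded n hn (by positivity) C hC'
          linarith
      · intro h
        exact bounded_supercritical n (by positivity) (by gcongr) (by gcongr) (by linarith)
  · rcases eq_or_ne t ∞ with rfl | ht'
    · exact iff_of_true (lns_top_bounded n hs h₁ h₂) le_top
    · have hτ : 0 < t.toReal := ENNReal.toReal_pos ht.ne' ht'
      rw [lns_bounded_iff n s s₁ s₂ ht ht', ENNReal.ofReal_le_iff_le_toReal ht',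
        div_le_iff₀ hσ]
      constructor
      · rintro ⟨C, hC⟩
        have hp := mul_pos hτ hσ
        have := critical_of_bounded n hn (mul_nonneg (by linarith) hτ.le)
          (mul_nonneg (by linarith) hτ.le) (by linarith) C hC
        linarith
      · intro h
        rcases h.eq_or_lt with h | h
        · exact bounded_critical n (by positivity) (mul_lt_mul_of_pos_right hand.1 hτ)
            (mul_lt_mul_of_pos_right hand.2 hτ) (by linarith)
        · exact bounded_supercritical n (by positivity) (by gcongr) (by gcongr) (by linarith)
end
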